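/- arXiv:1906.10150 — 2 statements merged into one kernel-verified Lean document; each statement's English description precedes it below -/
import Mathlib

section
/- For every entropy function S on three parties {A, B, V} satisfying SSA and WM, f^R is bounded below by half the mutual information: (1/2)(S_{AB} + 2 S_{AV} − S_{ABV} − S_V) ≥ (1/2)(S_A + S_B − S_{AB}). -/
/-!
Expanding the definitions, `2 f^R - I_{A:B} = I_{B:V|A} + (S_{A|B} + S_{A|V})`. Strong
subadditivity is the nonnegativity of the conditional mutual information, and weak monotonicity
is the nonnegativity of the sum of the two conditional entropies of `A`.
-/

/-- Strong subadditivity for an entropy function `S` on subsets of the party set `P`: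
for pairwise disjoint `X Y Z`, `S(X∪Z) + S(Y∪Z) ≥ S(X∪Y∪Z) + S(Z)`. -/
def SSAfn {P : Type} [DecidableEq P] (S : Finset P → ℝ) : Prop :=
  ∀ X Y Z : Finset P, Disjoint X Y → Disjoint X Z → Disjoint Y Z →
    S (X ∪ Z) + S (Y ∪ Z) ≥ S (X ∪ Y ∪ Z) + S Z

/-- Weak monotonicity for an entropy function `S` on subsets of the party set `P`:
for pairwise disjoint `X Y Z`, `S(X∪Z) + S(Y∪Z) ≥ S(X) + S(Y)`. -/
def WMfn {P : Type} [DecidableEq P] (S : Finset P → ℝ) : Prop :=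
  ∀ X Y Z : Finset P, Disjoint X Y → Disjoint X Z → Disjoint Y Z →
    S (X ∪ Z) + S (Y ∪ Z) ≥ S X + S Y

section Entropy

variable {P : Type*} [DecidableEq P]

/-- The conditional entropy `S_{A|B}`. It can be negative, but weak monotonicity bounds sums of two
conditional entropies. -/
def condEntropy (S : Finset P → ℝ) (A B : Finset P) : ℝ :=
  S (A ∪ B) - S B

/-- The mutual information `I_{A:B}`, the quantity that bounds `2 f^R` from below. -/
def mutualInfo (S : Finset P → ℝ) (A B : Finset P) : ℝ :=
  S A + S B - S (A ∪ B)

/-- The conditional mutual information `I_{A:B|V}`, whose nonnegativity is strong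
subadditivity. -/
def condMutualInfo (S : Finset P → ℝ) (A B V : Finset P) : ℝ :=
  S (A ∪ V) + S (B ∪ V) - S (A ∪ B ∪ V) - S V

/-- The quantity `f^R`, to be bounded from below by half the mutual information. Here `A`, `B`, `V`
are sets of parties; the paper's single parties are the singletons. -/
noncomputable def fR (S : Finset P → ℝ) (A B V : Finset P) : ℝ :=
  (1 / 2) * (S (A ∪ B) + 2 * S (A ∪ V) - S (A ∪ B ∪ V) - S V)

theorem two_mul_fR_sub_mutualInfo (S : Finset P → ℝ) (A B V : Finset P) :
    2 * fR S A B V - mutualInfo S A B =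
      condMutualInfo S B V A + (condEntropy S A B + condEntropy S A V) := by
  have union_rotate : B ∪ V ∪ A = A ∪ B ∪ V := by
    rw [Finset.union_comm, Finset.union_assoc]
  rw [fR, mutualInfo, condMutualInfo, condEntropy, condEntropy, union_rotate,
    Finset.union_comm B A, Finset.union_comm V A]
  ring

end Entropy

section Inequalities

variable {P : Type} [DecidableEq P] {S : Finset P → ℝ} {A B V : Finset P}

theorem SSAfn.condMutualInfo_nonneg (hSSA : SSAfn S) (hAB : Disjoint A B) (hAV : Disjoint A V)
    (hBV : Disjoint B V) : 0 ≤ condMutualInfo S A B V := by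
  rw [condMutualInfo]
  linarith [hSSA A B V hAB hAV hBV]

theorem WMfn.condEntropy_add_condEntropy_nonneg (hWM : WMfn S) (hAB : Disjoint A B)
    (hAV : Disjoint A V) (hBV : Disjoint B V) : 0 ≤ condEntropy S A B + condEntropy S A V := by
  rw [condEntropy, condEntropy, Finset.union_comm A B, Finset.union_comm A V]
  linarith [hWM B V A hBV hAB.symm hAV.symm]

theorem fR_ge_half_mutual_information_general (hSSA : SSAfn S) (hWM : WMfn S)
    (hAB : Disjoint A B) (hAV : Disjoint A V) (hBV : Disjoint B V) :
    fR S A B V ≥ (1 / 2) * mutualInfo S A B := by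
  linarith [two_mul_fR_sub_mutualInfo S A B V,
    hSSA.condMutualInfo_nonneg hBV hAB.symm hAV.symm,
    hWM.condEntropy_add_condEntropy_nonneg hAB hAV hBV]

end Inequalities

/-- Parties: `0 = A`, `1 = B`, `2 = V`.  For every entropy function satisfying SSA and WM,
`f^R = (1/2)(S_AB + 2 S_AV − S_ABV − S_V)` is at least `(1/2) I_{A:B}`. -/
theorem fR_ge_half_mutual_information (S : Finset (Fin 3) → ℝ)
    (hempty : S ∅ = 0) (hSSA : SSAfn S) (hWM : WMfn S) :
    (1/2) * (S {0, 1} + 2 * S {0, 2} - S {0, 1, 2} - S {2}) ≥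
      (1/2) * (S {0} + S {1} - S {0, 1}) := by
  simpa only [fR, mutualInfo, Finset.singleton_union, Finset.insert_union] using
    fR_ge_half_mutual_information_general (A := {0}) (B := {1}) (V := {2}) hSSA hWM
      (by decide) (by decide) (by decide)
end

section
/- Non-negativity in V is necessary for a finite optimized measure: let α ∈ ℝ^7 with α_V + α_AV + α_BV + α_ABV < 0, and let S0 be any entropy function on the two parties {A, B} satisfying SSA and WM. Then for every real number M there exists an entropy function S on the three parties {A, B, V} satisfying SSA and WM, agreeing with S0 on all subsets of {A, B}, such that f^α(S) < M. In fact, for every c ≥ 0 the function S defined by S(X) = S0(X ∩ {A,B}) + c if V ∈ X and S(X) = S0(X) otherwise is an entropy function satisfying SSA and WM, and f^α(S) = (α_A + α_AV)·S0({A}) + (α_B + α_BV)·S0({B}) + (α_AB + α_ABV)·S0({A,B}) + (α_V + α_AV + α_BV + α_ABV)·c, which tends to −∞ as c → ∞. -/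
/-- Parties of the three-party side: `0 = A`, `1 = B`, `2 = V`; components of `α`:
`0 = α_A`, `1 = α_B`, `2 = α_V`, `3 = α_AB`, `4 = α_AV`, `5 = α_BV`, `6 = α_ABV`. -/
noncomputable def fAlpha (α : Fin 7 → ℝ) (S : Finset (Fin 3) → ℝ) : ℝ :=
  α 0 * S {0} + α 1 * S {1} + α 2 * S {2} + α 3 * S {0, 1} +
    α 4 * S {0, 2} + α 5 * S {1, 2} + α 6 * S {0, 1, 2}

/-- Restriction of a subset of the parties `{A, B, V} = Fin 3` to the parties
`{A, B} = Fin 2` (i.e. the pullback of `X ∩ {A, B}` along `Fin.castSucc`). -/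
def restrictAB (X : Finset (Fin 3)) : Finset (Fin 2) :=
  Finset.univ.filter (fun i : Fin 2 => (Fin.castSucc i : Fin 3) ∈ X)

/-- The extension `S` of `S0` defined by `S(X) = S0(X ∩ {A,B}) + c` if `V ∈ X` and
`S(X) = S0(X)` otherwise. -/
noncomputable def extendByC (S0 : Finset (Fin 2) → ℝ) (c : ℝ) (X : Finset (Fin 3)) : ℝ :=
  S0 (restrictAB X) + (if (2 : Fin 3) ∈ X then c else 0)

section EntropyInequalities

variable {P Q : Type} [DecidableEq P] [DecidableEq Q] {S T : Finset P → ℝ}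

theorem SSAfn.add (hS : SSAfn S) (hT : SSAfn T) : SSAfn (S + T) := by
  intro X Y Z hXY hXZ hYZ
  have hSXYZ := hS X Y Z hXY hXZ hYZ
  have hTXYZ := hT X Y Z hXY hXZ hYZ
  simp only [Pi.add_apply]
  linarith

theorem WMfn.add (hS : WMfn S) (hT : WMfn T) : WMfn (S + T) := by
  intro X Y Z hXY hXZ hYZ
  have hSXYZ := hS X Y Z hXY hXZ hYZ
  have hTXYZ := hT X Y Z hXY hXZ hYZ
  simp only [Pi.add_apply]
  linarith

theorem SSAfn.comp (hS : SSAfn S) {φ : Finset Q → Finset P}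
    (hunion : ∀ X Y, φ (X ∪ Y) = φ X ∪ φ Y)
    (hdisjoint : ∀ X Y, Disjoint X Y → Disjoint (φ X) (φ Y)) : SSAfn (S ∘ φ) := by
  intro X Y Z hXY hXZ hYZ
  simpa only [Function.comp_apply, hunion] using
    hS (φ X) (φ Y) (φ Z) (hdisjoint X Y hXY) (hdisjoint X Z hXZ) (hdisjoint Y Z hYZ)

theorem WMfn.comp (hS : WMfn S) {φ : Finset Q → Finset P}
    (hunion : ∀ X Y, φ (X ∪ Y) = φ X ∪ φ Y)
    (hdisjoint : ∀ X Y, Disjoint X Y → Disjoint (φ X) (φ Y)) : WMfn (S ∘ φ) := by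
  intro X Y Z hXY hXZ hYZ
  simpa only [Function.comp_apply, hunion] using
    hS (φ X) (φ Y) (φ Z) (hdisjoint X Y hXY) (hdisjoint X Z hXZ) (hdisjoint Y Z hYZ)

theorem WMfn.of_monotone (hS : Monotone S) : WMfn S :=
  fun _ _ _ _ _ _ => add_le_add (hS Finset.subset_union_left) (hS Finset.subset_union_left)

/-- The entropy function of a product state in which the party `v` has entropy `c` and all other
parties are pure. -/
noncomputable def singlePartyEntropy (v : P) (c : ℝ) (X : Finset P) : ℝ :=
  if v ∈ X then c else 0

theorem singlePartyEntropy_monotone (v : P) {c : ℝ} (hc : 0 ≤ c) :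
    Monotone (singlePartyEntropy v c) := by
  intro X Y hXY
  have hv : v ∈ X → v ∈ Y := fun h => hXY h
  grind [singlePartyEntropy]

theorem singlePartyEntropy_ssa (v : P) {c : ℝ} (hc : 0 ≤ c) :
    SSAfn (singlePartyEntropy v c) := by
  intro X Y Z _ _ _
  grind [singlePartyEntropy]

theorem singlePartyEntropy_wm (v : P) {c : ℝ} (hc : 0 ≤ c) : WMfn (singlePartyEntropy v c) :=
  WMfn.of_monotone (singlePartyEntropy_monotone v hc)

end EntropyInequalities

theorem restrictAB_union (X Y : Finset (Fin 3)) :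
    restrictAB (X ∪ Y) = restrictAB X ∪ restrictAB Y := by
  simp only [restrictAB, Finset.mem_union, Finset.filter_or]

theorem restrictAB_disjoint (X Y : Finset (Fin 3)) (hXY : Disjoint X Y) :
    Disjoint (restrictAB X) (restrictAB Y) :=
  Finset.disjoint_filter.mpr fun _ _ hX => Finset.disjoint_left.mp hXY hX

theorem restrictAB_image_castSucc (X : Finset (Fin 2)) :
    restrictAB (X.image Fin.castSucc) = X := by
  ext i
  simp [restrictAB]

theorem fAlpha_add (α : Fin 7 → ℝ) (S T : Finset (Fin 3) → ℝ) :
    fAlpha α (S + T) = fAlpha α S + fAlpha α T := by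
  simp only [fAlpha, Pi.add_apply]
  ring

theorem fAlpha_comp_restrictAB (α : Fin 7 → ℝ) {S0 : Finset (Fin 2) → ℝ} (h0 : S0 ∅ = 0) :
    fAlpha α (S0 ∘ restrictAB) =
      (α 0 + α 4) * S0 {0} + (α 1 + α 5) * S0 {1} + (α 3 + α 6) * S0 {0, 1} := by
  have hA : restrictAB {0} = {0} := by decide
  have hB : restrictAB {1} = {1} := by decide
  have hV : restrictAB {2} = ∅ := by decide
  have hAB : restrictAB {0, 1} = {0, 1} := by decide
  have hAV : restrictAB {0, 2} = {0} := by decide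
  have hBV : restrictAB {1, 2} = {1} := by decide
  have hABV : restrictAB {0, 1, 2} = {0, 1} := by decide
  simp only [fAlpha, Function.comp_apply, hA, hB, hV, hAB, hAV, hBV, hABV, h0]
  ring

theorem fAlpha_singlePartyEntropy_two (α : Fin 7 → ℝ) (c : ℝ) :
    fAlpha α (singlePartyEntropy 2 c) = (α 2 + α 4 + α 5 + α 6) * c := by
  simp [fAlpha, singlePartyEntropy, add_mul]

section ExtendByC

variable {S0 : Finset (Fin 2) → ℝ}

theorem extendByC_eq_add (S0 : Finset (Fin 2) → ℝ) (c : ℝ) :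
    extendByC S0 c = S0 ∘ restrictAB + singlePartyEntropy 2 c :=
  rfl

theorem extendByC_ssa (hS0 : SSAfn S0) {c : ℝ} (hc : 0 ≤ c) : SSAfn (extendByC S0 c) :=
  (hS0.comp restrictAB_union restrictAB_disjoint).add (singlePartyEntropy_ssa 2 hc)

theorem extendByC_wm (hS0 : WMfn S0) {c : ℝ} (hc : 0 ≤ c) : WMfn (extendByC S0 c) :=
  (hS0.comp restrictAB_union restrictAB_disjoint).add (singlePartyEntropy_wm 2 hc)

theorem extendByC_image_castSucc (S0 : Finset (Fin 2) → ℝ) (c : ℝ) (X : Finset (Fin 2)) :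
    extendByC S0 c (X.image Fin.castSucc) = S0 X := by
  have hV : (2 : Fin 3) ∉ X.image Fin.castSucc := fun h =>
    let ⟨i, _, hi⟩ := Finset.mem_image.mp h
    Fin.castSucc_ne_last i hi
  rw [extendByC, restrictAB_image_castSucc, if_neg hV, add_zero]

theorem extendByC_empty (h0 : S0 ∅ = 0) (c : ℝ) : extendByC S0 c ∅ = 0 :=
  (extendByC_image_castSucc S0 c ∅).trans h0

theorem fAlpha_extendByC (α : Fin 7 → ℝ) (h0 : S0 ∅ = 0) (c : ℝ) :
    fAlpha α (extendByC S0 c) =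
      (α 0 + α 4) * S0 {0} + (α 1 + α 5) * S0 {1} + (α 3 + α 6) * S0 {0, 1} +
        (α 2 + α 4 + α 5 + α 6) * c := by
  rw [extendByC_eq_add, fAlpha_add, fAlpha_comp_restrictAB α h0, fAlpha_singlePartyEntropy_two]

theorem tendsto_fAlpha_extendByC_atBot {α : Fin 7 → ℝ} (hα : α 2 + α 4 + α 5 + α 6 < 0)
    (h0 : S0 ∅ = 0) :
    Filter.Tendsto (fun c : ℝ => fAlpha α (extendByC S0 c)) Filter.atTop Filter.atBot := by
  simp only [fAlpha_extendByC α h0]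
  exact Filter.tendsto_atBot_add_const_left _ _ (Filter.tendsto_id.const_mul_atTop_of_neg hα)

end ExtendByC

/-- Non-negativity in `V` is necessary for a finite optimized measure: if
`α_V + α_AV + α_BV + α_ABV < 0` then for any two-party entropy function `S0` satisfying
SSA and WM and any `M` there is a three-party entropy function `S` satisfying SSA and WM,
agreeing with `S0` on subsets of `{A, B}`, with `f^α(S) < M`.  In fact, for every `c ≥ 0`
the explicit extension `extendByC S0 c` works and its `f^α`-value is the stated linear
function of `c`, which tends to `−∞` as `c → ∞`. -/
theorem nonnegativity_in_V_necessary (α : Fin 7 → ℝ)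
    (hα : α 2 + α 4 + α 5 + α 6 < 0)
    (S0 : Finset (Fin 2) → ℝ) (h0 : S0 ∅ = 0) (hSSA0 : SSAfn S0) (hWM0 : WMfn S0) :
    (∀ M : ℝ, ∃ S : Finset (Fin 3) → ℝ, S ∅ = 0 ∧ SSAfn S ∧ WMfn S ∧
      (∀ X : Finset (Fin 2), S (X.image Fin.castSucc) = S0 X) ∧ fAlpha α S < M) ∧
    (∀ c : ℝ, 0 ≤ c →
      extendByC S0 c ∅ = 0 ∧ SSAfn (extendByC S0 c) ∧ WMfn (extendByC S0 c) ∧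
      (∀ X : Finset (Fin 2), extendByC S0 c (X.image Fin.castSucc) = S0 X) ∧
      fAlpha α (extendByC S0 c) =
        (α 0 + α 4) * S0 {0} + (α 1 + α 5) * S0 {1} + (α 3 + α 6) * S0 {0, 1} +
          (α 2 + α 4 + α 5 + α 6) * c) ∧
    Filter.Tendsto (fun c : ℝ => fAlpha α (extendByC S0 c)) Filter.atTop Filter.atBot := by
  have hlim := tendsto_fAlpha_extendByC_atBot hα h0
  refine ⟨fun M => ?_, fun c hc => ?_, hlim⟩
  · obtain ⟨c, hM, hc⟩ :=
      ((hlim.eventually_lt_atBot M).and (Filter.eventually_ge_atTop (0 : ℝ))).exists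
    exact ⟨extendByC S0 c, extendByC_empty h0 c, extendByC_ssa hSSA0 hc, extendByC_wm hWM0 hc,
      extendByC_image_castSucc S0 c, hM⟩
  · exact ⟨extendByC_empty h0 c, extendByC_ssa hSSA0 hc, extendByC_wm hWM0 hc,
      extendByC_image_castSucc S0 c, fAlpha_extendByC α h0 c⟩
end
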